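/- Let f : ℝ^d → ℝ be convex, and let p be a probability measure on ℝ^d with finite first moment, barycenter x̄ = ∫ x dp(x), and with f integrable with respect to p. Then ∫ f dp = f(x̄) if and only if there exist a ∈ ℝ^d and c ∈ ℝ such that f(x) = ⟨a, x⟩ + c for p-almost every x and f(x̄) = ⟨a, x̄⟩ + c; that is, equality in Jensen's inequality holds if and only if f coincides p-almost surely with an affine function that touches f at the barycenter. -/

import Mathlib

/-!
A convex function lies above an affine function that touches it at the barycenter: separate the
graph point there from the strict epigraph by Hahn–Banach. That affine function has integral
`f(x̄)`, so equality in Jensen's inequality says that a nonnegative function, the difference of `f`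
and its affine minorant, has integral zero.
-/

open MeasureTheory
open scoped RealInnerProductSpace

section Subgradient

open Filter Topology

lemma exists_strongDual_le_and_lt_interior {V : Type*} [TopologicalSpace V] [AddCommGroup V]
    [Module ℝ V] [IsTopologicalAddGroup V] [ContinuousSMul ℝ V] {A : Set V} {z : V}
    (hA : Convex ℝ A) (hA_int : (interior A).Nonempty) (hz : z ∉ interior A) :
    ∃ L : StrongDual ℝ V, (∀ v ∈ A, L z ≤ L v) ∧ ∀ v ∈ interior A, L z < L v := by
  obtain ⟨L, hL⟩ := geometric_hahn_banach_point_open hA.interior isOpen_interior hz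
  have h_dense : A ⊆ closure (interior A) := by
    rw [hA.closure_interior_eq_closure_of_nonempty_interior hA_int]
    exact subset_closure
  have h_closed : IsClosed {v | L z ≤ L v} := isClosed_le continuous_const L.continuous
  exact ⟨L, fun v hv ↦ closure_minimal (fun w hw ↦ (hL w hw).le) h_closed (h_dense hv), hL⟩

variable {E : Type*} [TopologicalSpace E] {f : E → ℝ} {s : Set E} {x : E}

lemma mem_interior_strict_epigraph {r : ℝ} (hx : x ∈ interior s) (hfx : ContinuousAt f x)
    (hr : f x < r) : (x, r) ∈ interior {q : E × ℝ | q.1 ∈ s ∧ f q.1 < q.2} := by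
  rw [mem_interior_iff_mem_nhds] at hx ⊢
  have h_fst : Tendsto Prod.fst (𝓝 (x, r)) (𝓝 x) := continuousAt_fst
  exact (h_fst.eventually hx).and ((hfx.tendsto.comp h_fst).eventually_lt continuousAt_snd hr)

variable [AddCommGroup E] [Module ℝ E]

/-- `l` is a subgradient of `f` at `x` relative to `s`: the affine function through `(x, f x)` with
linear part `l` lies below `f` on `s`. Subgradients are continuous functionals, and as for
`HasFDerivWithinAt` the point `x` is not required to lie in `s`. -/
def HasSubgradientWithinAt (f : E → ℝ) (l : StrongDual ℝ E) (s : Set E) (x : E) : Prop :=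
  ∀ y ∈ s, f x + l (y - x) ≤ f y

theorem exists_hasSubgradientWithinAt_of_convexOn [IsTopologicalAddGroup E] [ContinuousSMul ℝ E]
    (hf : ConvexOn ℝ s f) (hx : x ∈ interior s) (hfx : ContinuousAt f x) :
    ∃ l : StrongDual ℝ E, HasSubgradientWithinAt f l s x := by
  have h_above := mem_interior_strict_epigraph hx hfx (lt_add_one (f x))
  obtain ⟨L, hL_le, hL_lt⟩ := exists_strongDual_le_and_lt_interior hf.convex_strict_epigraph
    ⟨_, h_above⟩ (z := (x, f x)) fun h ↦ (interior_subset h).2.false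
  have hL_apply (y : E) (t : ℝ) : L (y, t) = L (y, 0) + t * L (0, 1) := by
    rw [← smul_eq_mul, ← map_smul, ← map_add]
    simp
  -- The separating hyperplane is not vertical, so it is the graph of an affine function.
  have hL_pos : 0 < L (0, 1) := by
    have := hL_lt _ h_above
    rw [hL_apply x (f x), hL_apply x (f x + 1)] at this
    linarith
  let l : StrongDual ℝ E := -(L (0, 1))⁻¹ • L.comp (.inl ℝ E ℝ)
  have hl_apply (y : E) : l (y - x) = (L (x, 0) - L (y, 0)) / L (0, 1) := by
    have : l (y - x) = -(L (0, 1))⁻¹ * (L (y, 0) - L (x, 0)) := by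
      rw [map_sub, mul_sub]
      rfl
    rw [this]
    ring
  refine ⟨l, fun y hy ↦ le_of_forall_gt_imp_ge_of_dense fun t ht ↦ ?_⟩
  have h_sep := hL_le (y, t) ⟨hy, ht⟩
  rw [hL_apply x, hL_apply y] at h_sep
  rw [hl_apply, ← le_sub_iff_add_le', div_le_iff₀ hL_pos]
  linarith

end Subgradient

section Jensen

variable {Ω E : Type*} [MeasurableSpace Ω] {μ : Measure Ω} [IsProbabilityMeasure μ]
  [NormedAddCommGroup E] [NormedSpace ℝ E] [CompleteSpace E]
  {f : E → ℝ} {s : Set E} {X : Ω → E}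

lemma integral_strongDual_add_const (hX : Integrable X μ) (l : StrongDual ℝ E) (c : ℝ) :
    ∫ ω, (l (X ω) + c) ∂μ = l (∫ ω, X ω ∂μ) + c := by
  rw [integral_add (l.integrable_comp hX) (integrable_const c), l.integral_comp_comm hX,
    integral_const, probReal_univ, one_smul]

theorem HasSubgradientWithinAt.integral_comp_eq_iff {l : StrongDual ℝ E}
    (hl : HasSubgradientWithinAt f l s (∫ ω, X ω ∂μ)) (hX : Integrable X μ)
    (hXs : ∀ᵐ ω ∂μ, X ω ∈ s) (hfX : Integrable (fun ω ↦ f (X ω)) μ) :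
    ∫ ω, f (X ω) ∂μ = f (∫ ω, X ω ∂μ) ↔
      ∀ᵐ ω ∂μ, f (X ω) = l (X ω) + (f (∫ ω, X ω ∂μ) - l (∫ ω, X ω ∂μ)) := by
  set c := f (∫ ω, X ω ∂μ) - l (∫ ω, X ω ∂μ) with hc
  have h_integral : ∫ ω, (l (X ω) + c) ∂μ = f (∫ ω, X ω ∂μ) := by
    rw [integral_strongDual_add_const hX, hc, add_sub_cancel]
  have h_le : ∀ᵐ ω ∂μ, l (X ω) + c ≤ f (X ω) := by
    filter_upwards [hXs] with ω hω
    have := hl (X ω) hω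
    rw [map_sub] at this
    linarith
  have h_affine : Integrable (fun ω ↦ l (X ω) + c) μ :=
    (l.integrable_comp hX).add (integrable_const c)
  rw [← h_integral, eq_comm, integral_eq_iff_of_ae_le h_affine hfX h_le]
  exact Filter.eventuallyEq_comm

theorem jensen_equality_iff_affine_general (hf : ConvexOn ℝ s f) (hX : Integrable X μ)
    (hXs : ∀ᵐ ω ∂μ, X ω ∈ s) (hfX : Integrable (fun ω ↦ f (X ω)) μ)
    (h_mean : ∫ ω, X ω ∂μ ∈ interior s) (hf_cont : ContinuousAt f (∫ ω, X ω ∂μ)) :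
    ∫ ω, f (X ω) ∂μ = f (∫ ω, X ω ∂μ) ↔
      ∃ (l : StrongDual ℝ E) (c : ℝ),
        (∀ᵐ ω ∂μ, f (X ω) = l (X ω) + c) ∧ f (∫ ω, X ω ∂μ) = l (∫ ω, X ω ∂μ) + c := by
  constructor
  · intro h_eq
    obtain ⟨l, hl⟩ := exists_hasSubgradientWithinAt_of_convexOn hf h_mean hf_cont
    exact ⟨l, _, (hl.integral_comp_eq_iff hX hXs hfX).1 h_eq, (add_sub_cancel _ _).symm⟩
  · rintro ⟨l, c, h_ae, h_touch⟩
    rw [integral_congr_ae h_ae, integral_strongDual_add_const hX, h_touch]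

end Jensen

/-- Equality case of Jensen's inequality: for a convex `f : ℝ^d → ℝ` and a
probability measure `p` with finite first moment and `f` integrable, `∫ f dp = f(x̄)` (with
`x̄ = ∫ x dp`) iff `f` coincides `p`-a.s. with an affine function `⟨a, ·⟩ + c` that also
touches `f` at the barycenter. -/
theorem jensen_equality_iff_affine
    (d : ℕ) (f : EuclideanSpace ℝ (Fin d) → ℝ)
    (hf : ConvexOn ℝ Set.univ f)
    (p : Measure (EuclideanSpace ℝ (Fin d))) [IsProbabilityMeasure p]
    (hmom : Integrable (fun x => x) p) (hfi : Integrable f p) :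
    (∫ x, f x ∂p = f (∫ x, x ∂p)) ↔
      ∃ (a : EuclideanSpace ℝ (Fin d)) (c : ℝ),
        (∀ᵐ x ∂p, f x = ⟪a, x⟫ + c) ∧ f (∫ x, x ∂p) = ⟪a, ∫ x, x ∂p⟫ + c := by
  simpa only [(InnerProductSpace.toDual ℝ _).surjective.exists,
    InnerProductSpace.toDual_apply_apply] using
    jensen_equality_iff_affine_general hf hmom (by simp) hfi (by simp)
      hf.locallyLipschitz.continuous.continuousAt
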